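/- arXiv:2204.09880 — 2 statements merged into one kernel-verified Lean document; each statement's English description precedes it below -/
import Mathlib

section
/- Let τ > 0 and let B = −τ n_τ be the helical magnetic field. For u ∈ (−1,1) and x = c₁(u), with T(x) the unit tangent to c₁ at x, one has B(x) · T(x) = 0 if and only if u² = 1; in particular B(x) · T(x) ≠ 0 for all x in the range of c₁ on (−1,1), so B is tangent to the curve Γ at only finitely many points (the two poles (0,0,±1)). -/
noncomputable section

/-- First branch of the tangency curve. -/
def c₁ (τ u : ℝ) : Fin 3 → ℝ :=
  ![Real.sqrt (1 - u ^ 2) * Real.sin (τ * u),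
    -(Real.sqrt (1 - u ^ 2) * Real.cos (τ * u)), u]

/-- The helical magnetic potential. -/
def nHelix (τ : ℝ) (x : Fin 3 → ℝ) : Fin 3 → ℝ :=
  ![τ⁻¹ * Real.cos (τ * x 2), τ⁻¹ * Real.sin (τ * x 2), 0]

/-- Euclidean inner product on ℝ³. -/
def dot3 (x y : Fin 3 → ℝ) : ℝ := x 0 * y 0 + x 1 * y 1 + x 2 * y 2

/-- The unit tangent vector `c₁′(u)/‖c₁′(u)‖` to the curve `c₁`. -/
def unitTangent (τ u : ℝ) : Fin 3 → ℝ :=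
  (‖(WithLp.equiv 2 (Fin 3 → ℝ)).symm (deriv (c₁ τ) u)‖)⁻¹ • deriv (c₁ τ) u

/-!
At height `u` the field `B` is minus the unit angular vector `(cos τu, sin τu, 0)`, whereas `c₁ u`
lies at distance `√(1 - u²)` from the axis in the radial direction `(sin τu, -cos τu, 0)`. The
derivative of the radial direction is `τ` times the angular vector, so `B` sees only the angular
component `τ √(1 - u²)` of `c₁'`. Dividing by the speed gives
`B · T = -τ (1 - u²) / √(1 + τ² (1 - u²)²)`.
-/

section Tangency

open Real

variable {τ u : ℝ}

theorem dot3_smul_right (a : ℝ) (x y : Fin 3 → ℝ) : dot3 x (a • y) = a * dot3 x y := by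
  simp only [dot3, Pi.smul_apply, smul_eq_mul]
  ring

theorem neg_smul_nHelix (hτ : τ ≠ 0) (x : Fin 3 → ℝ) :
    (-τ) • nHelix τ x = ![-cos (τ * x 2), -sin (τ * x 2), 0] := by
  simp [nHelix, hτ]

theorem hasDerivAt_cylindrical {r θ : ℝ → ℝ} {r' θ' : ℝ}
    (hr : HasDerivAt r r' u) (hθ : HasDerivAt θ θ' u) :
    HasDerivAt (fun v ↦ ![r v * sin (θ v), -(r v * cos (θ v)), v])
      ![r' * sin (θ u) + r u * (cos (θ u) * θ'),
        -(r' * cos (θ u) + r u * (-sin (θ u) * θ')), 1] u := by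
  rw [hasDerivAt_pi]
  intro i
  fin_cases i
  · exact hr.mul hθ.sin
  · exact (hr.mul hθ.cos).neg
  · exact hasDerivAt_id u

theorem hasDerivAt_sqrt_one_sub_sq (hu : u ^ 2 ≠ 1) :
    HasDerivAt (fun v ↦ √(1 - v ^ 2)) (-u / √(1 - u ^ 2)) u := by
  have h : HasDerivAt (fun v : ℝ ↦ 1 - v ^ 2) (2 * -u) u := by
    simpa using (hasDerivAt_pow 2 u).const_sub 1
  simpa only [mul_div_mul_left _ _ (two_ne_zero' ℝ)] using h.sqrt (sub_ne_zero.mpr hu.symm)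

theorem deriv_c₁ (hu : u ^ 2 ≠ 1) :
    deriv (c₁ τ) u =
      ![-u / √(1 - u ^ 2) * sin (τ * u) + √(1 - u ^ 2) * (cos (τ * u) * τ),
        -(-u / √(1 - u ^ 2) * cos (τ * u) + √(1 - u ^ 2) * (-sin (τ * u) * τ)), 1] :=
  (hasDerivAt_cylindrical (hasDerivAt_sqrt_one_sub_sq hu) (hasDerivAt_const_mul τ)).deriv

theorem dot3_neg_smul_nHelix_deriv_c₁ (hτ : τ ≠ 0) (hu : u ^ 2 ≠ 1) :
    dot3 ((-τ) • nHelix τ (c₁ τ u)) (deriv (c₁ τ) u) = -(τ * √(1 - u ^ 2)) := by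
  simp only [neg_smul_nHelix hτ, deriv_c₁ hu, dot3, c₁, Matrix.cons_val]
  linear_combination -(τ * √(1 - u ^ 2)) * sin_sq_add_cos_sq (τ * u)

theorem norm_deriv_c₁ (hu : u ^ 2 < 1) :
    ‖(WithLp.equiv 2 (Fin 3 → ℝ)).symm (deriv (c₁ τ) u)‖ =
      √(1 + τ ^ 2 * (1 - u ^ 2) ^ 2) / √(1 - u ^ 2) := by
  have hpos : 0 < 1 - u ^ 2 := sub_pos.mpr hu
  have hsq : √(1 - u ^ 2) ^ 2 = 1 - u ^ 2 := sq_sqrt hpos.le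
  rw [← sqrt_div' _ hpos.le, EuclideanSpace.norm_eq, deriv_c₁ hu.ne]
  congr 1
  simp only [WithLp.equiv_symm_apply, Fin.sum_univ_three, norm_eq_abs, sq_abs, Matrix.cons_val]
  calc
    _ = ((-u / √(1 - u ^ 2)) ^ 2 + √(1 - u ^ 2) ^ 2 * τ ^ 2)
          * (sin (τ * u) ^ 2 + cos (τ * u) ^ 2) + 1 := by ring
    _ = u ^ 2 / (1 - u ^ 2) + (1 - u ^ 2) * τ ^ 2 + 1 := by
      rw [sin_sq_add_cos_sq, mul_one, div_pow, neg_sq, hsq]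
    _ = (1 + τ ^ 2 * (1 - u ^ 2) ^ 2) / (1 - u ^ 2) := by
      field_simp
      ring

theorem dot3_neg_smul_nHelix_unitTangent (hτ : τ ≠ 0) (hu : u ^ 2 < 1) :
    dot3 ((-τ) • nHelix τ (c₁ τ u)) (unitTangent τ u) =
      -(τ * (1 - u ^ 2) / √(1 + τ ^ 2 * (1 - u ^ 2) ^ 2)) := by
  rw [unitTangent, dot3_smul_right, dot3_neg_smul_nHelix_deriv_c₁ hτ hu.ne, norm_deriv_c₁ hu]
  calc
    _ = -(τ * (√(1 - u ^ 2) * √(1 - u ^ 2)) / √(1 + τ ^ 2 * (1 - u ^ 2) ^ 2)) := by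
      rw [inv_div]
      ring
    _ = _ := by rw [mul_self_sqrt (sub_pos.mpr hu).le]

end Tangency

/-- For `B = −τ n_τ` and `x = c₁(u)` with `u ∈ (−1,1)`: `B(x)·T(x) = 0 ↔ u² = 1`;
in particular `B(x)·T(x) ≠ 0` on the range of `c₁` over `(−1,1)`. -/
theorem stmt_9 (τ u : ℝ) (hτ : 0 < τ) (hu : u ∈ Set.Ioo (-1 : ℝ) 1) :
    (dot3 ((-τ) • nHelix τ (c₁ τ u)) (unitTangent τ u) = 0 ↔ u ^ 2 = 1) ∧
    dot3 ((-τ) • nHelix τ (c₁ τ u)) (unitTangent τ u) ≠ 0 := by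
  have hu_sq : u ^ 2 < 1 := (sq_lt_one_iff_abs_lt_one u).mpr (abs_lt.mpr hu)
  have hspeed : √(1 + τ ^ 2 * (1 - u ^ 2) ^ 2) ≠ 0 := by positivity
  have tangent_iff :
      dot3 ((-τ) • nHelix τ (c₁ τ u)) (unitTangent τ u) = 0 ↔ u ^ 2 = 1 := by
    rw [dot3_neg_smul_nHelix_unitTangent hτ.ne' hu_sq, neg_eq_zero, div_eq_zero_iff,
      or_iff_left hspeed, mul_eq_zero, or_iff_right hτ.ne', sub_eq_zero, eq_comm]
  exact ⟨tangent_iff, tangent_iff.not.mpr hu_sq.ne⟩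
end
end

section
/- Let τ > 0, u ∈ (−1,1), let γ = c₁(u), N(x) = −x, and let V = T × N be the explicit conormal vector along Γ at γ, and define p(r) = −cos r · N(γ) − sin r · V. Then the absolute value of the derivative at r = 0 of the function r ↦ n_τ(p(r)) · (−p(r)) equals (1/τ)√(1 + τ²(1 − u²)²). Consequently, for the helical field B = −τ n_τ, the magnetic curvature κ_{n,B}(γ) = |∂_r (B · N)|_{r=0}| equals √(1 + τ²(1 − u²)²), which is nonzero for every u. -/
noncomputable section

/-- `m(u) = √((1 − u²)/(1 + τ²(1 − u²)²))`. -/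
def mAux (τ u : ℝ) : ℝ := Real.sqrt ((1 - u ^ 2) / (1 + τ ^ 2 * (1 - u ^ 2) ^ 2))

/-- The explicit unit tangent vector to `c₁` at `c₁(u)`. -/
def Tex (τ u : ℝ) : Fin 3 → ℝ :=
  mAux τ u •
    ![-u * Real.sin (τ * u) / Real.sqrt (1 - u ^ 2)
        + τ * Real.sqrt (1 - u ^ 2) * Real.cos (τ * u),
      u * Real.cos (τ * u) / Real.sqrt (1 - u ^ 2)
        + τ * Real.sqrt (1 - u ^ 2) * Real.sin (τ * u),
      1]

/-- The cross product on ℝ³. -/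
def cross3 (a b : Fin 3 → ℝ) : Fin 3 → ℝ :=
  ![a 1 * b 2 - a 2 * b 1, a 2 * b 0 - a 0 * b 2, a 0 * b 1 - a 1 * b 0]

/-- The unit-speed geodesic of the sphere `p(r) = −cos r · N(γ) − sin r · V`,
where `γ = c₁(u)`, `N(x) = −x` and `V = T × N`. -/
def geo (τ u r : ℝ) : Fin 3 → ℝ :=
  (-Real.cos r) • (-(c₁ τ u)) + (-Real.sin r) • cross3 (Tex τ u) (-(c₁ τ u))

/-! Let `g(x) = n_τ(x) · x`. Since `p'(0) = -V` with `V = γ × T`, the derivative of `-g(p(r))` at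
`0` is `∇g(γ) · (γ × T) = T · (∇g(γ) × γ)`. Along `Γ` both `g` and `|x|²` are constant, hence
`∇g(γ) × γ` is a multiple of the unit tangent `T`, and the derivative is the factor:
`-τ⁻¹ √(1 + τ²(1 - u²)²)`. -/

section

open Matrix

lemma dot3_eq_dotProduct (x y : Fin 3 → ℝ) : dot3 x y = x ⬝ᵥ y :=
  (vec3_dotProduct x y).symm

lemma cross3_eq_crossProduct (a b : Fin 3 → ℝ) : cross3 a b = a ⨯₃ b :=
  (cross_apply a b).symm

lemma dot3_smul_left (a : ℝ) (x y : Fin 3 → ℝ) : dot3 (a • x) y = a * dot3 x y := by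
  simp only [dot3_eq_dotProduct, smul_dotProduct, smul_eq_mul]

lemma hasDerivAt_cos_smul_add_sin_smul {E : Type*} [NormedAddCommGroup E] [NormedSpace ℝ E]
    (x v : E) (r : ℝ) :
    HasDerivAt (fun r : ℝ => Real.cos r • x + Real.sin r • v)
      (-Real.sin r • x + Real.cos r • v) r :=
  ((Real.hasDerivAt_cos r).smul_const x).add ((Real.hasDerivAt_sin r).smul_const v)

lemma geo_eq_cos_smul_add_sin_smul (τ u : ℝ) :
    geo τ u = fun r => Real.cos r • c₁ τ u + Real.sin r • Tex τ u ⨯₃ c₁ τ u := by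
  funext r
  simp only [geo, cross3_eq_crossProduct, map_neg, smul_neg, neg_smul, neg_neg]

lemma geo_zero (τ u : ℝ) : geo τ u 0 = c₁ τ u := by
  simp [geo]

lemma hasDerivAt_geo_zero (τ u : ℝ) : HasDerivAt (geo τ u) (Tex τ u ⨯₃ c₁ τ u) 0 := by
  rw [geo_eq_cos_smul_add_sin_smul]
  refine (hasDerivAt_cos_smul_add_sin_smul _ _ 0).congr_deriv ?_
  rw [Real.sin_zero, Real.cos_zero, neg_zero, zero_smul, zero_add, one_smul]

/-- The Euclidean gradient at `x` of the function `x ↦ n_τ(x) · x`, whose zero set on the unit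
sphere is the tangency curve `Γ`. It is the gradient only for `τ ≠ 0`. -/
def gradNHelixDot (τ : ℝ) (x : Fin 3 → ℝ) : Fin 3 → ℝ :=
  ![τ⁻¹ * Real.cos (τ * x 2), τ⁻¹ * Real.sin (τ * x 2),
    x 1 * Real.cos (τ * x 2) - x 0 * Real.sin (τ * x 2)]

lemma hasDerivAt_dot3_nHelix_neg {τ : ℝ} (hτ : τ ≠ 0) {p : ℝ → Fin 3 → ℝ} {p' : Fin 3 → ℝ}
    {r : ℝ} (hp : HasDerivAt p p' r) :
    HasDerivAt (fun r => dot3 (nHelix τ (p r)) (-(p r))) (-(gradNHelixDot τ (p r) ⬝ᵥ p')) r := by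
  have hcoord (i : Fin 3) : HasDerivAt (fun r => p r i) (p' i) r := hasDerivAt_pi.1 hp i
  have hcos := ((hcoord 2).const_mul τ).cos.const_mul τ⁻¹
  have hsin := ((hcoord 2).const_mul τ).sin.const_mul τ⁻¹
  have hdot := ((hcos.mul (hcoord 0)).add (hsin.mul (hcoord 1))).neg
  refine (hdot.congr_deriv ?_).congr_of_eventuallyEq (.of_forall fun r => ?_)
  · simp only [gradNHelixDot, vec3_dotProduct, cons_val]
    field_simp
    ring
  · simp only [dot3, nHelix, cons_val, Pi.neg_apply, Pi.add_apply, Pi.mul_apply]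
    ring

lemma one_sub_sq_pos {u : ℝ} (hu : u ∈ Set.Ioo (-1 : ℝ) 1) : 0 < 1 - u ^ 2 :=
  sub_pos.2 <| (sq_lt_one_iff_abs_lt_one u).2 <| abs_lt.2 hu

lemma mAux_eq_sqrt_div_sqrt (τ : ℝ) {u : ℝ} (hu : u ^ 2 ≤ 1) :
    mAux τ u = √(1 - u ^ 2) / √(1 + τ ^ 2 * (1 - u ^ 2) ^ 2) :=
  Real.sqrt_div (sub_nonneg.2 hu) _

lemma Tex_dotProduct_self (τ : ℝ) {u : ℝ} (hu : u ∈ Set.Ioo (-1 : ℝ) 1) :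
    Tex τ u ⬝ᵥ Tex τ u = 1 := by
  have hs : √(1 - u ^ 2) ^ 2 = 1 - u ^ 2 := Real.sq_sqrt (one_sub_sq_pos hu).le
  have hm : mAux τ u ^ 2 = (1 - u ^ 2) / (1 + τ ^ 2 * (1 - u ^ 2) ^ 2) :=
    Real.sq_sqrt (div_nonneg (one_sub_sq_pos hu).le (by positivity))
  have hsc : Real.sin (τ * u) ^ 2 + Real.cos (τ * u) ^ 2 = 1 := Real.sin_sq_add_cos_sq _
  calc Tex τ u ⬝ᵥ Tex τ u
      = mAux τ u ^ 2 * (u ^ 2 / √(1 - u ^ 2) ^ 2 + τ ^ 2 * √(1 - u ^ 2) ^ 2 + 1) := by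
        simp only [Tex, smul_dotProduct, dotProduct_smul, vec3_dotProduct, cons_val, smul_eq_mul]
        linear_combination
          mAux τ u ^ 2 * (u ^ 2 / √(1 - u ^ 2) ^ 2 + τ ^ 2 * √(1 - u ^ 2) ^ 2) * hsc
    _ = 1 := by
        rw [hm, hs]
        field_simp [(one_sub_sq_pos hu).ne']
        ring

lemma gradNHelixDot_c₁ (τ u : ℝ) :
    gradNHelixDot τ (c₁ τ u) =
      ![τ⁻¹ * Real.cos (τ * u), τ⁻¹ * Real.sin (τ * u), -√(1 - u ^ 2)] := by
  have hsc := Real.sin_sq_add_cos_sq (τ * u)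
  simp only [gradNHelixDot, c₁, cons_val]
  refine vec3_eq rfl rfl ?_
  linear_combination -√(1 - u ^ 2) * hsc

lemma gradNHelixDot_cross_c₁ {τ u : ℝ} (hτ : τ ≠ 0) (hu : u ∈ Set.Ioo (-1 : ℝ) 1) :
    gradNHelixDot τ (c₁ τ u) ⨯₃ c₁ τ u =
      (-(1 / τ * √(1 + τ ^ 2 * (1 - u ^ 2) ^ 2))) • Tex τ u := by
  have hs : √(1 - u ^ 2) ≠ 0 := (Real.sqrt_pos.2 (one_sub_sq_pos hu)).ne'
  have hq : √(1 + τ ^ 2 * (1 - u ^ 2) ^ 2) ≠ 0 := by positivity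
  have hscale : -(1 / τ * √(1 + τ ^ 2 * (1 - u ^ 2) ^ 2)) * mAux τ u = -(√(1 - u ^ 2) / τ) := by
    rw [mAux_eq_sqrt_div_sqrt τ (sub_nonneg.1 (one_sub_sq_pos hu).le)]
    field_simp
  have hsc := Real.sin_sq_add_cos_sq (τ * u)
  rw [gradNHelixDot_c₁, Tex, smul_smul, hscale, c₁, cross_apply, smul_vec3]
  simp only [cons_val, smul_eq_mul]
  refine vec3_eq ?_ ?_ ?_ <;> field_simp
  · ring
  · ring
  · linear_combination -hsc

lemma hasDerivAt_dot3_nHelix_geo_zero {τ u : ℝ} (hτ : τ ≠ 0) (hu : u ∈ Set.Ioo (-1 : ℝ) 1) :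
    HasDerivAt (fun r : ℝ => dot3 (nHelix τ (geo τ u r)) (-(geo τ u r)))
      (-(1 / τ * √(1 + τ ^ 2 * (1 - u ^ 2) ^ 2))) 0 := by
  refine (hasDerivAt_dot3_nHelix_neg hτ (hasDerivAt_geo_zero τ u)).congr_deriv ?_
  rw [geo_zero]
  calc -(gradNHelixDot τ (c₁ τ u) ⬝ᵥ Tex τ u ⨯₃ c₁ τ u)
      = Tex τ u ⬝ᵥ gradNHelixDot τ (c₁ τ u) ⨯₃ c₁ τ u := by
        rw [triple_product_permutation, ← cross_anticomm, dotProduct_neg, neg_neg]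
    _ = -(1 / τ * √(1 + τ ^ 2 * (1 - u ^ 2) ^ 2)) := by
        rw [gradNHelixDot_cross_c₁ hτ hu, dotProduct_smul, Tex_dotProduct_self τ hu, smul_eq_mul,
          mul_one]

end

/-- `|d/dr [n_τ(p(r)) · (−p(r))]|_{r=0}| = (1/τ)√(1 + τ²(1 − u²)²)`; consequently for
`B = −τ n_τ` the magnetic curvature `κ_{n,B}(γ) = |d/dr [B(p(r))·(−p(r))]|_{r=0}|`
equals `√(1 + τ²(1 − u²)²)`, which is nonzero. -/
theorem stmt_13 (τ u : ℝ) (hτ : 0 < τ) (hu : u ∈ Set.Ioo (-1 : ℝ) 1) :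
    |deriv (fun r : ℝ => dot3 (nHelix τ (geo τ u r)) (-(geo τ u r))) 0|
        = (1 / τ) * Real.sqrt (1 + τ ^ 2 * (1 - u ^ 2) ^ 2) ∧
    |deriv (fun r : ℝ => dot3 ((-τ) • nHelix τ (geo τ u r)) (-(geo τ u r))) 0|
        = Real.sqrt (1 + τ ^ 2 * (1 - u ^ 2) ^ 2) ∧
    Real.sqrt (1 + τ ^ 2 * (1 - u ^ 2) ^ 2) ≠ 0 := by
  have hsqrt : 0 < √(1 + τ ^ 2 * (1 - u ^ 2) ^ 2) := by positivity
  have hderiv := (hasDerivAt_dot3_nHelix_geo_zero hτ.ne' hu).deriv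
  refine ⟨?_, ?_, hsqrt.ne'⟩
  · rw [hderiv, abs_neg, abs_of_pos (by positivity)]
  · simp only [dot3_smul_left]
    rw [deriv_const_mul_field, hderiv, neg_mul_neg, ← mul_assoc, mul_one_div_cancel hτ.ne', one_mul,
      abs_of_pos hsqrt]
end
end
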